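/- Let X be a real random variable with an absolutely continuous density f whose support is ℝ. If ρ is a measurable function with E[|ρ(X)|] < ∞ satisfying E[ρ(X)φ(X)] = −E[φ'(X)] for all φ ∈ C_c^∞(ℝ), then ρ(x) = f'(x)/f(x) for almost every x (with respect to the law of X); in particular the score is unique up to almost-everywhere equality. -/

import Mathlib

open MeasureTheory ProbabilityTheory Real

/-!
Against Lebesgue measure the score identity reads `∫ (f ρ) φ = -∫ f φ'`: the locally integrable
function `f ρ` is the weak derivative of `f`. A primitive `G` of `f ρ` has the same weak derivative,
and a locally integrable function with zero weak derivative is almost everywhere constant (du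
Bois-Reymond), because the test functions of integral zero are exactly the derivatives of test
functions. Hence `f = c + G` almost everywhere, and Lebesgue's differentiation theorem gives
`f' = G' = f ρ` almost everywhere.
-/

open Set Filter Topology

lemma exists_lt_tsupport_subset_Ioo {E : Type*} [Zero E] {φ : ℝ → E} (hφ : HasCompactSupport φ)
    (a : ℝ) : ∃ R, a < R ∧ tsupport φ ⊆ Ioo (-R) R := by
  obtain ⟨R, hR, hsub⟩ := hφ.isCompact.isBounded.subset_ball_lt a 0
  exact ⟨R, hR, by simpa [Real.ball_eq_Ioo] using hsub⟩

section

variable {E : Type*} [NormedAddCommGroup E] [NormedSpace ℝ E]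

lemma exists_contDiff_hasCompactSupport_deriv_eq [CompleteSpace E] {k : ℝ → E}
    (hk : ContDiff ℝ (⊤ : ℕ∞) k) (hkc : HasCompactSupport k) (hk0 : ∫ x, k x = 0) :
    ∃ φ : ℝ → E, ContDiff ℝ (⊤ : ℕ∞) φ ∧ HasCompactSupport φ ∧ deriv φ = k := by
  obtain ⟨R, -, hR⟩ := exists_lt_tsupport_subset_Ioo hkc 0
  have hderiv (x : ℝ) : HasDerivAt (fun x ↦ ∫ t in (-R)..x, k t) (k x) x :=
    hk.continuous.integral_hasStrictDerivAt _ x |>.hasDerivAt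
  have hderiv_eq : deriv (fun x ↦ ∫ t in (-R)..x, k t) = k := funext fun x ↦ (hderiv x).deriv
  refine ⟨_, contDiff_infty_iff_deriv.2 ⟨fun x ↦ (hderiv x).differentiableAt, ?_⟩, ?_, hderiv_eq⟩
  · rwa [hderiv_eq]
  refine HasCompactSupport.intro (isCompact_Icc (a := -R) (b := R)) fun x hx ↦ ?_
  obtain hx | hx : x < -R ∨ R < x := by simpa only [mem_Icc, not_and_or, not_le] using hx
  · rw [intervalIntegral.integral_symm, intervalIntegral.integral_of_le hx.le,
      setIntegral_eq_zero_of_forall_eq_zero, neg_zero]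
    exact fun t ht ↦ image_eq_zero_of_notMem_tsupport fun h ↦ ht.2.not_gt (hR h).1
  · rw [intervalIntegral.integral_eq_integral_of_support_subset, hk0]
    exact fun t ht ↦ ⟨(hR (subset_tsupport _ ht)).1, (hR (subset_tsupport _ ht)).2.le.trans hx.le⟩

lemma ae_eq_of_ae_hasDerivAt_of_ae_eq {ν : Measure ℝ} [ν.IsOpenPosMeasure] {f g f' g' : ℝ → E}
    (hfg : f =ᵐ[ν] g) (hf : ∀ᵐ x ∂ν, HasDerivAt f (f' x) x)
    (hg : ∀ᵐ x ∂ν, HasDerivAt g (g' x) x) : f' =ᵐ[ν] g' := by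
  have hdense : Dense {x | f x = g x} := Measure.dense_of_ae hfg
  filter_upwards [hfg, hf, hg] with x hx hfx hgx
  have haccPt : AccPt x (𝓟 {x | f x = g x}) :=
    accPt_principal_iff_nhdsWithin.2
      (mem_closure_iff_nhdsWithin_neBot.1 (hdense.sdiff_singleton x x))
  exact haccPt.uniqueDiffWithinAt.eq_deriv _ hfx.hasDerivWithinAt
    (hgx.hasDerivWithinAt.congr (fun _ hy ↦ hy) hx)

/-- `v` is the weak (distributional) derivative of `u` on `ℝ`. Both functions are required to be
locally integrable, so that the integrals against test functions converge. -/
structure HasWeakDeriv (u v : ℝ → E) : Prop where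
  locallyIntegrable : LocallyIntegrable u
  locallyIntegrable_deriv : LocallyIntegrable v
  integral_smul_eq : ∀ φ : ℝ → ℝ, ContDiff ℝ (⊤ : ℕ∞) φ → HasCompactSupport φ →
    ∫ x, φ x • v x = -∫ x, deriv φ x • u x

namespace HasWeakDeriv

lemma sub {u₁ u₂ v₁ v₂ : ℝ → E} (h₁ : HasWeakDeriv u₁ v₁) (h₂ : HasWeakDeriv u₂ v₂) :
    HasWeakDeriv (u₁ - u₂) (v₁ - v₂) where
  locallyIntegrable := h₁.locallyIntegrable.sub h₂.locallyIntegrable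
  locallyIntegrable_deriv := h₁.locallyIntegrable_deriv.sub h₂.locallyIntegrable_deriv
  integral_smul_eq φ hφ hφc := by
    have hφ' : Continuous (deriv φ) := hφ.continuous_deriv (by simp)
    have integrable_left {v : ℝ → E} (hv : LocallyIntegrable v) :=
      hv.integrable_smul_left_of_hasCompactSupport hφ.continuous hφc
    have integrable_right {u : ℝ → E} (hu : LocallyIntegrable u) :=
      hu.integrable_smul_left_of_hasCompactSupport hφ' hφc.deriv
    simp only [Pi.sub_apply, smul_sub]
    rw [integral_sub (integrable_left h₁.2) (integrable_left h₂.2),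
      integral_sub (integrable_right h₁.1) (integrable_right h₂.1),
      h₁.integral_smul_eq φ hφ hφc, h₂.integral_smul_eq φ hφ hφc]
    abel

lemma exists_ae_eq_const [CompleteSpace E] {u : ℝ → E} (hu : HasWeakDeriv u 0) :
    ∃ c, ∀ᵐ x, u x = c := by
  let b : ContDiffBump (0 : ℝ) := default
  let ψ : ℝ → ℝ := b.normed volume
  have hψ : ContDiff ℝ (⊤ : ℕ∞) ψ := b.contDiff_normed
  have hψc : HasCompactSupport ψ := b.hasCompactSupport_normed
  have hψint : Integrable ψ := hψ.continuous.integrable_of_hasCompactSupport hψc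
  have integrable_smul {g : ℝ → ℝ} (hg : Continuous g) (hgc : HasCompactSupport g) :=
    hu.locallyIntegrable.integrable_smul_left_of_hasCompactSupport hg hgc
  refine ⟨∫ x, ψ x • u x, ae_eq_of_integral_contDiff_smul_eq hu.locallyIntegrable
    (locallyIntegrable_const _) fun g hg hgc ↦ ?_⟩
  have hgint : Integrable g := hg.continuous.integrable_of_hasCompactSupport hgc
  obtain ⟨φ, hφ, hφc, hφ'⟩ := exists_contDiff_hasCompactSupport_deriv_eq
    (k := fun x ↦ g x - (∫ y, g y) * ψ x) (hg.sub (contDiff_const.mul hψ))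
    (hgc.sub hψc.mul_left)
    (by rw [integral_sub hgint (hψint.const_mul _), integral_const_mul, b.integral_normed]; ring)
  have hzero : ∫ x, (g x - (∫ y, g y) * ψ x) • u x = 0 := by
    simpa [hφ'] using (hu.integral_smul_eq φ hφ hφc).symm
  simp only [sub_smul, mul_smul] at hzero
  rw [integral_sub (integrable_smul hg.continuous hgc)
    ((integrable_smul hψ.continuous hψc).fun_smul _), integral_smul, sub_eq_zero] at hzero
  rw [hzero, integral_smul_const]

end HasWeakDeriv

end

lemma integral_mul_eq_neg_integral_deriv_mul_primitive {h φ : ℝ → ℝ} {a b c : ℝ}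
    (hh : IntervalIntegrable h volume a b) (hφ : ContDiff ℝ 1 φ) (hc : c ∈ uIcc a b)
    (ha : φ a = 0) (hb : φ b = 0) :
    ∫ x in a..b, φ x * h x = -∫ x in a..b, deriv φ x * ∫ t in c..x, h t := by
  have hparts := hφ.contDiffOn.absolutelyContinuousOnInterval.integral_mul_deriv_eq_deriv_mul
    (hh.absolutelyContinuousOnInterval_intervalIntegral hc)
  have hderiv : ∫ x in a..b, φ x * deriv (fun x ↦ ∫ t in c..x, h t) x = ∫ x in a..b, φ x * h x := by
    refine intervalIntegral.integral_congr_ae ?_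
    filter_upwards [hh.ae_hasDerivAt_integral] with x hx hxab
    rw [(hx (uIoc_subset_uIcc hxab) c hc).deriv]
  rw [← hderiv, hparts, ha, hb]
  ring

lemma hasWeakDeriv_primitive {h : ℝ → ℝ} (hh : LocallyIntegrable h) (c : ℝ) :
    HasWeakDeriv (fun x ↦ ∫ t in c..x, h t) h := by
  have hint (a b : ℝ) : IntervalIntegrable h volume a b :=
    (hh.integrableOn_isCompact isCompact_uIcc).intervalIntegrable
  refine ⟨(intervalIntegral.continuous_primitive hint c).locallyIntegrable, hh, fun φ hφ hφc ↦ ?_⟩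
  obtain ⟨R, hcR, hR⟩ := exists_lt_tsupport_subset_Ioo hφc |c|
  have hc : c ∈ uIcc (-R) R := Icc_subset_uIcc (abs_le.1 hcR.le)
  have hsub : tsupport φ ⊆ Ioc (-R) R := hR.trans Ioo_subset_Ioc_self
  have hparts := integral_mul_eq_neg_integral_deriv_mul_primitive (hint (-R) R)
    (hφ.of_le (by simp)) hc (image_eq_zero_of_notMem_tsupport fun hmem ↦ (hR hmem).1.false)
    (image_eq_zero_of_notMem_tsupport fun hmem ↦ (hR hmem).2.false)
  rwa [intervalIntegral.integral_eq_integral_of_support_subset,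
    intervalIntegral.integral_eq_integral_of_support_subset] at hparts
  · exact fun x hx ↦ hsub (support_deriv_subset (left_ne_zero_of_mul hx))
  · exact fun x hx ↦ hsub (subset_tsupport φ (left_ne_zero_of_mul hx))

namespace HasWeakDeriv

variable {u v : ℝ → ℝ}

lemma exists_ae_eq_primitive_add (huv : HasWeakDeriv u v) (a : ℝ) :
    ∃ c, ∀ᵐ x, u x = (∫ t in a..x, v t) + c := by
  have hzero := huv.sub (hasWeakDeriv_primitive huv.locallyIntegrable_deriv a)
  rw [sub_self] at hzero
  obtain ⟨c, hc⟩ := hzero.exists_ae_eq_const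
  exact ⟨c, hc.mono fun x hx ↦ sub_eq_iff_eq_add'.1 hx⟩

lemma ae_eq_of_ae_hasDerivAt {u' : ℝ → ℝ} (huv : HasWeakDeriv u v)
    (hu : ∀ᵐ x, HasDerivAt u (u' x) x) : u' =ᵐ[volume] v := by
  obtain ⟨c, hc⟩ := huv.exists_ae_eq_primitive_add 0
  refine ae_eq_of_ae_hasDerivAt_of_ae_eq hc hu ?_
  filter_upwards [LocallyIntegrable.ae_hasDerivAt_integral huv.locallyIntegrable_deriv] with x hx
  exact (hx 0).add_const c

end HasWeakDeriv

section

variable {α E : Type*} [MeasurableSpace α] {ν : Measure α} [NormedAddCommGroup E] [NormedSpace ℝ E]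
  {f : α → ℝ}

lemma ofReal_toReal_smul_ae_eq (hf0 : 0 ≤ᵐ[ν] f) (g : α → E) :
    (fun x ↦ (ENNReal.ofReal (f x)).toReal • g x) =ᵐ[ν] fun x ↦ f x • g x := by
  filter_upwards [hf0] with x hx
  rw [ENNReal.toReal_ofReal hx]

lemma integral_withDensity_ofReal (hf : AEMeasurable f ν) (hf0 : 0 ≤ᵐ[ν] f) (g : α → E) :
    ∫ x, g x ∂ν.withDensity (fun x ↦ ENNReal.ofReal (f x)) = ∫ x, f x • g x ∂ν := by
  rw [integral_withDensity_eq_integral_toReal_smul₀ hf.ennreal_ofReal (by simp)]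
  exact integral_congr_ae (ofReal_toReal_smul_ae_eq hf0 g)

lemma integrable_withDensity_ofReal_iff (hf : AEMeasurable f ν) (hf0 : 0 ≤ᵐ[ν] f) {g : α → E} :
    Integrable g (ν.withDensity fun x ↦ ENNReal.ofReal (f x)) ↔
      Integrable (fun x ↦ f x • g x) ν := by
  rw [integrable_withDensity_iff_integrable_smul₀' hf.ennreal_ofReal (by simp)]
  exact integrable_congr (ofReal_toReal_smul_ae_eq hf0 g)

lemma locallyIntegrable_withDensity_ofReal_iff [TopologicalSpace α] [SFinite ν]
    (hf : AEMeasurable f ν) (hf0 : 0 ≤ᵐ[ν] f) {g : α → E} :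
    LocallyIntegrable g (ν.withDensity fun x ↦ ENNReal.ofReal (f x)) ↔
      LocallyIntegrable (fun x ↦ f x • g x) ν := by
  have integrableOn_iff (s : Set α) :
      IntegrableOn g s (ν.withDensity fun x ↦ ENNReal.ofReal (f x)) ↔
        IntegrableOn (fun x ↦ f x • g x) s ν := by
    rw [IntegrableOn, restrict_withDensity',
      integrable_withDensity_ofReal_iff hf.restrict (ae_restrict_of_ae hf0), IntegrableOn]
  simp only [LocallyIntegrable, IntegrableAtFilter, integrableOn_iff]

end

/-- `ρ` is a score of the distribution `ν` on `ℝ`: it satisfies the integration by parts identity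
`E[ρ(X) φ(X)] = -E[φ'(X)]` for `X` of law `ν` and all test functions `φ`. Local integrability is
what makes the left-hand side converge. -/
structure IsScore (ν : Measure ℝ) (ρ : ℝ → ℝ) : Prop where
  locallyIntegrable : LocallyIntegrable ρ ν
  integral_mul_eq : ∀ φ : ℝ → ℝ, ContDiff ℝ (⊤ : ℕ∞) φ → HasCompactSupport φ →
    ∫ x, ρ x * φ x ∂ν = -∫ x, deriv φ x ∂ν

lemma isScore_map {Ω : Type*} [MeasurableSpace Ω] {μ : Measure Ω} {X : Ω → ℝ}
    (hX : AEMeasurable X μ) {ρ : ℝ → ℝ} (hρ : LocallyIntegrable ρ (Measure.map X μ))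
    (hscore : ∀ φ : ℝ → ℝ, ContDiff ℝ (⊤ : ℕ∞) φ → HasCompactSupport φ →
      ∫ ω, ρ (X ω) * φ (X ω) ∂μ = -∫ ω, deriv φ (X ω) ∂μ) :
    IsScore (Measure.map X μ) ρ := by
  refine ⟨hρ, fun φ hφ hφc ↦ ?_⟩
  have hφ' : Continuous (deriv φ) := hφ.continuous_deriv (by simp)
  rw [integral_map hX (hρ.aestronglyMeasurable.fun_mul hφ.continuous.aestronglyMeasurable),
    integral_map hX hφ'.aestronglyMeasurable]
  exact hscore φ hφ hφc

namespace IsScore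

variable {f ρ : ℝ → ℝ}

lemma hasWeakDeriv (hρ : IsScore (volume.withDensity fun x ↦ ENNReal.ofReal (f x)) ρ)
    (hf : LocallyIntegrable f) (hf0 : 0 ≤ᵐ[volume] f) :
    HasWeakDeriv f (fun x ↦ f x * ρ x) := by
  have hfm : AEMeasurable f := hf.aestronglyMeasurable.aemeasurable
  refine ⟨hf, (locallyIntegrable_withDensity_ofReal_iff hfm hf0).1 hρ.locallyIntegrable,
    fun φ hφ hφc ↦ ?_⟩
  calc ∫ x, φ x • (f x * ρ x) = ∫ x, f x • (ρ x * φ x) := by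
        simp only [smul_eq_mul, mul_comm, mul_left_comm]
    _ = -∫ x, f x • deriv φ x := by
        rw [← integral_withDensity_ofReal hfm hf0, hρ.integral_mul_eq φ hφ hφc,
          integral_withDensity_ofReal hfm hf0]
    _ = -∫ x, deriv φ x • f x := by simp only [smul_eq_mul, mul_comm]

lemma ae_eq_div {f' : ℝ → ℝ}
    (hρ : IsScore (volume.withDensity fun x ↦ ENNReal.ofReal (f x)) ρ)
    (hf : LocallyIntegrable f) (hf0 : 0 ≤ᵐ[volume] f) (hf' : ∀ᵐ x, HasDerivAt f (f' x) x) :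
    ∀ᵐ x ∂volume.withDensity fun x ↦ ENNReal.ofReal (f x), ρ x = f' x / f x := by
  rw [ae_withDensity_iff' hf.aestronglyMeasurable.aemeasurable.ennreal_ofReal]
  filter_upwards [(hρ.hasWeakDeriv hf hf0).ae_eq_of_ae_hasDerivAt hf'] with x hx hfx
  have hpos : 0 < f x := ENNReal.ofReal_pos.1 (pos_iff_ne_zero.2 hfx)
  rw [hx, mul_div_cancel_left₀ _ hpos.ne']

end IsScore

theorem stmt7_general {Ω : Type*} [MeasurableSpace Ω] {μ : Measure Ω}
    {X : Ω → ℝ} (hX : AEMeasurable X μ)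
    {f f' : ℝ → ℝ} (hf0 : 0 ≤ᵐ[volume] f) (hf : LocallyIntegrable f)
    (hf' : ∀ᵐ x, HasDerivAt f (f' x) x)
    (hdens : Measure.map X μ = volume.withDensity (fun x ↦ ENNReal.ofReal (f x)))
    {ρ : ℝ → ℝ} (hρ : LocallyIntegrable ρ (Measure.map X μ))
    (hscore : ∀ φ : ℝ → ℝ, ContDiff ℝ (⊤ : ℕ∞) φ → HasCompactSupport φ →
      ∫ ω, ρ (X ω) * φ (X ω) ∂μ = -∫ ω, deriv φ (X ω) ∂μ) :
    ∀ᵐ x ∂Measure.map X μ, ρ x = f' x / f x := by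
  have hlaw := isScore_map hX hρ hscore
  rw [hdens] at hlaw ⊢
  exact hlaw.ae_eq_div hf hf0 hf'

/-- Uniqueness of the score: if `X` has positive differentiable density `f` on `ℝ` and `ρ`
satisfies the integration by parts identity, then `ρ = f'/f` almost everywhere w.r.t. the
law of `X`. -/
theorem stmt7 {Ω : Type*} [MeasurableSpace Ω] (μ : Measure Ω) [IsProbabilityMeasure μ]
    (X : Ω → ℝ) (hX : Measurable X)
    (f f' : ℝ → ℝ) (hfpos : ∀ x, 0 < f x)
    (hf : ∀ x, HasDerivAt f (f' x) x)
    (hdens : Measure.map X μ = MeasureTheory.volume.withDensity (fun x => ENNReal.ofReal (f x)))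
    (ρ : ℝ → ℝ) (hρm : Measurable ρ)
    (hρint : Integrable (fun ω => ρ (X ω)) μ)
    (hscore : ∀ φ : ℝ → ℝ, ContDiff ℝ (⊤ : ℕ∞) φ → HasCompactSupport φ →
      ∫ ω, ρ (X ω) * φ (X ω) ∂μ = -∫ ω, deriv φ (X ω) ∂μ) :
    ∀ᵐ x ∂(Measure.map X μ), ρ x = f' x / f x := by
  have hfc : Continuous f := continuous_iff_continuousAt.2 fun x ↦ (hf x).continuousAt
  have hρ := (integrable_map_measure hρm.aestronglyMeasurable hX.aemeasurable).2 hρint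
  exact stmt7_general hX.aemeasurable (ae_of_all _ fun x ↦ (hfpos x).le) hfc.locallyIntegrable
    (ae_of_all _ hf) hdens hρ.locallyIntegrable hscore
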